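/- Let G be a group, L a normal subgroup of G, and x ∈ G such that G is generated by L together with x. Suppose there are elements a, b, c, d ∈ G and y ∈ G such that y lies in the subgroup generated by a⁻¹xa and b⁻¹xb, and L is contained in the subgroup generated by c⁻¹yc and d⁻¹yd. Then G is generated by the four conjugates (ac)⁻¹x(ac), (bc)⁻¹x(bc), (ad)⁻¹x(ad), (bd)⁻¹x(bd) of x. -/

import Mathlib

/-!
Conjugating by `c` a word for `y` in the conjugates `a⁻¹xa` and `b⁻¹xb` gives a word for `c⁻¹yc` in
`(ac)⁻¹x(ac)` and `(bc)⁻¹x(bc)`, so the subgroup `H` generated by the composed conjugates contains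
`L`. As `G ⧸ L` is cyclic, generated by the image of `x`, every conjugate of `x` is congruent to
`x` modulo `L`. Hence `H`, which contains `L` and a conjugate of `x`, contains `x`.
-/

section Conjugates

variable {G : Type*} [Group G]

theorem inv_mul_mul_mem_closure_image {S : Set G} {z : G} (hz : z ∈ Subgroup.closure S) (g : G) :
    g⁻¹ * z * g ∈ Subgroup.closure ((fun s ↦ g⁻¹ * s * g) '' S) := by
  have hconj : ⇑(MulAut.conj g⁻¹).toMonoidHom = fun s ↦ g⁻¹ * s * g := by ext; simp
  simpa only [MonoidHom.map_closure, hconj] using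
    Subgroup.mem_map_of_mem (MulAut.conj g⁻¹).toMonoidHom hz

open scoped Pointwise in
theorem inv_mul_mul_mem_closure_conj_image_mul {A C : Set G} {x y c : G}
    (hy : y ∈ Subgroup.closure ((fun a ↦ a⁻¹ * x * a) '' A)) (hc : c ∈ C) :
    c⁻¹ * y * c ∈ Subgroup.closure ((fun g ↦ g⁻¹ * x * g) '' (A * C)) := by
  refine Subgroup.closure_mono ?_ (inv_mul_mul_mem_closure_image hy c)
  rintro _ ⟨_, ⟨a, ha, rfl⟩, rfl⟩
  exact ⟨a * c, Set.mul_mem_mul ha hc, by simp only [mul_inv_rev, mul_assoc]⟩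

variable {L : Subgroup G} [L.Normal] {x : G}

theorem zpowers_quotientMk_eq_top (hG : Subgroup.closure (L ∪ {x}) = ⊤) :
    Subgroup.zpowers (x : G ⧸ L) = ⊤ := by
  calc Subgroup.zpowers (x : G ⧸ L)
      = (L ⊔ Subgroup.zpowers x).map (QuotientGroup.mk' L) := by
        rw [Subgroup.map_sup, QuotientGroup.map_mk'_self, bot_sup_eq, MonoidHom.map_zpowers,
          QuotientGroup.mk'_apply]
    _ = (⊤ : Subgroup G).map (QuotientGroup.mk' L) := by
        rw [← hG, Subgroup.closure_union, Subgroup.closure_eq, Subgroup.zpowers_eq_closure]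
    _ = ⊤ := Subgroup.map_top_of_surjective _ (QuotientGroup.mk'_surjective L)

theorem quotientMk_inv_mul_mul_eq (hG : Subgroup.closure (L ∪ {x}) = ⊤) (g : G) :
    ((g⁻¹ * x * g : G) : G ⧸ L) = x := by
  obtain ⟨n, hn⟩ : (g : G ⧸ L) ∈ Subgroup.zpowers (x : G ⧸ L) :=
    zpowers_quotientMk_eq_top hG ▸ Subgroup.mem_top _
  have hcomm : Commute (g : G ⧸ L) x := hn ▸ Commute.zpow_self (x : G ⧸ L) n
  simpa only [QuotientGroup.mk_mul, QuotientGroup.mk_inv, mul_assoc] using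
    hcomm.inv_mul_cancel_assoc

theorem eq_top_of_le_of_inv_mul_mul_mem {H : Subgroup G} {g : G}
    (hG : Subgroup.closure (L ∪ {x}) = ⊤) (hLH : L ≤ H) (hg : g⁻¹ * x * g ∈ H) : H = ⊤ := by
  have hdiff : (g⁻¹ * x * g)⁻¹ * x ∈ L := QuotientGroup.eq.1 (quotientMk_inv_mul_mul_eq hG g)
  have hx : x ∈ H := (H.mul_mem_cancel_left (H.inv_mem hg)).1 (hLH hdiff)
  rw [eq_top_iff, ← hG, Subgroup.closure_le]
  exact Set.union_subset hLH (Set.singleton_subset_iff.2 hx)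

open scoped Pointwise in
theorem four_conjugates_generate_general {A C : Set G} {y : G}
    (hG : Subgroup.closure (L ∪ {x}) = ⊤) (hA : A.Nonempty) (hC : C.Nonempty)
    (hy : y ∈ Subgroup.closure ((fun a ↦ a⁻¹ * x * a) '' A))
    (hL : L ≤ Subgroup.closure ((fun c ↦ c⁻¹ * y * c) '' C)) :
    Subgroup.closure ((fun g ↦ g⁻¹ * x * g) '' (A * C)) = ⊤ := by
  obtain ⟨g, hg⟩ := hA.mul hC
  refine eq_top_of_le_of_inv_mul_mul_mem hG (hL.trans ?_)
    (Subgroup.subset_closure (Set.mem_image_of_mem _ hg))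
  rw [Subgroup.closure_le, Set.image_subset_iff]
  exact fun c hc ↦ inv_mul_mul_mem_closure_conj_image_mul hy hc

end Conjugates

theorem four_conjugates_generate {G : Type*} [Group G] (L : Subgroup G) [L.Normal]
    (x : G) (hGgen : Subgroup.closure (L ∪ {x}) = ⊤)
    (a b c d y : G)
    (hy : y ∈ Subgroup.closure {a⁻¹ * x * a, b⁻¹ * x * b})
    (hL : L ≤ Subgroup.closure {c⁻¹ * y * c, d⁻¹ * y * d}) :
    Subgroup.closure {(a * c)⁻¹ * x * (a * c), (b * c)⁻¹ * x * (b * c),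
      (a * d)⁻¹ * x * (a * d), (b * d)⁻¹ * x * (b * d)} = ⊤ := by
  have hgen := four_conjugates_generate_general (A := {a, b}) (C := {c, d}) hGgen
    (Set.insert_nonempty _ _) (Set.insert_nonempty _ _)
    (by rwa [Set.image_pair]) (by rwa [Set.image_pair])
  simpa only [← Set.image2_mul, Set.image2_insert_right, Set.image2_singleton_right,
    Set.image_insert_eq, Set.image_singleton, Set.insert_union, Set.singleton_union] using hgen
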